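/- arXiv:1402.6279 — 3 statements merged into one kernel-verified Lean document; each statement's English description precedes it below -/
import Mathlib

section
/- For every t ∈ ℂ and every integer k ≥ 1: ∂((Θ + tθ²)^k) = [(Θ + tθ²)^k, θ] and ∂̄((Θ + tθ²)^k) = t[(Θ + tθ²)^k, θ]. -/
/-- An abstract model of the Dolbeault double complex of `(p,q)`-forms on a complex
manifold: a bigraded associative `ℂ`-algebra `Ω = ⨁ Ω^{p,q}`, graded-commutative with
respect to total degree, with `ℂ`-linear operators `∂` (`pd`) and `∂̄` (`pdb`) of
bidegrees `(1,0)` and `(0,1)`, squaring to zero and anticommuting, satisfying the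
graded Leibniz rule. -/
structure DolbeaultAlgebra (Ω : Type*) [Ring Ω] [Algebra ℂ Ω] where
  /-- the `ℂ`-subspace of elements of bidegree `(p,q)` -/
  deg : ℕ → ℕ → Submodule ℂ Ω
  one_mem : (1 : Ω) ∈ deg 0 0
  mul_mem : ∀ {p q p' q'} {a b : Ω}, a ∈ deg p q → b ∈ deg p' q' →
    a * b ∈ deg (p + p') (q + q')
  gcomm : ∀ {p q p' q'} (a b : Ω), a ∈ deg p q → b ∈ deg p' q' →
    a * b = ((-1 : ℂ) ^ ((p + q) * (p' + q'))) • (b * a)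
  /-- the operator `∂` -/
  pd : Ω →ₗ[ℂ] Ω
  /-- the operator `∂̄` -/
  pdb : Ω →ₗ[ℂ] Ω
  pd_mem : ∀ {p q} {a : Ω}, a ∈ deg p q → pd a ∈ deg (p + 1) q
  pdb_mem : ∀ {p q} {a : Ω}, a ∈ deg p q → pdb a ∈ deg p (q + 1)
  pd_pd : ∀ a : Ω, pd (pd a) = 0
  pdb_pdb : ∀ a : Ω, pdb (pdb a) = 0
  pd_pdb : ∀ a : Ω, pd (pdb a) + pdb (pd a) = 0
  pd_leibniz : ∀ {p q} (a b : Ω), a ∈ deg p q →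
    pd (a * b) = pd a * b + ((-1 : ℂ) ^ (p + q)) • (a * pd b)
  pdb_leibniz : ∀ {p q} (a b : Ω), a ∈ deg p q →
    pdb (a * b) = pdb a * b + ((-1 : ℂ) ^ (p + q)) • (a * pdb b)

namespace DolbeaultAlgebra

variable {Ω : Type*} [Ring Ω] [Algebra ℂ Ω] {r : ℕ}

/-- the entrywise extension of `∂` to `r × r` matrices over `Ω` -/
def mpd (A : DolbeaultAlgebra Ω) (M : Matrix (Fin r) (Fin r) Ω) :
    Matrix (Fin r) (Fin r) Ω := M.map A.pd

/-- the entrywise extension of `∂̄` to `r × r` matrices over `Ω` -/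
def mpdb (A : DolbeaultAlgebra Ω) (M : Matrix (Fin r) (Fin r) Ω) :
    Matrix (Fin r) (Fin r) Ω := M.map A.pdb

/-- the assertion that all entries of a matrix lie in `Ω^{p,q}` -/
def MatDeg (A : DolbeaultAlgebra Ω) (p q : ℕ) (M : Matrix (Fin r) (Fin r) Ω) : Prop :=
  ∀ i j, M i j ∈ A.deg p q

end DolbeaultAlgebra

variable {Ω : Type*} [Ring Ω] [Algebra ℂ Ω]

/-
Call `a` an `ε`-Leibniz element of an operator `D` if `D (a b) = (D a) b + ε a (D b)` for all `b`.
For both operators `θ` is `(-1)`-Leibniz, so `θ²` is `1`-Leibniz; so is `Θ = ∂̄θ`, because `∂̄`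
squares to zero and anticommutes with `∂`. Hence each operator acts on powers of `M = Θ + tθ²` as
an ungraded derivation, as does `[·, θ]`, and it is enough to take `k = 1`. There
`[M, θ] = [Θ, θ]`, while `∂θ² = 0`, `∂̄Θ = 0`, `∂̄θ² = [Θ, θ]` and `∂Θ = -∂̄∂θ = ∂̄θ² = [Θ, θ]`.
-/

section Leibniz

variable {K R : Type*} [CommRing K] [Ring R] [Algebra K R] {D D' : R →ₗ[K] R} {a b x : R}
  {ε ε' : K}

/-- The `ε`-Leibniz elements of `D`: left factors past which `D` moves at the cost of the scalar
`ε`. The scalar encodes parity: for a derivation of a graded algebra, elements of degree `n`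
are `(-1) ^ n`-Leibniz. -/
def leibnizSubmodule (D : R →ₗ[K] R) (ε : K) : Submodule K R where
  carrier := {a | ∀ b, D (a * b) = D a * b + ε • (a * D b)}
  zero_mem' b := by simp
  add_mem' {a a'} ha ha' b := by
    rw [add_mul, map_add, ha b, ha' b, map_add, add_mul, add_mul, smul_add]
    abel
  smul_mem' c a ha b := by
    rw [smul_mul_assoc, map_smul, ha b, map_smul, smul_add, smul_mul_assoc, smul_mul_assoc,
      smul_comm]

theorem mul_mem_leibnizSubmodule (ha : a ∈ leibnizSubmodule D ε)
    (hb : b ∈ leibnizSubmodule D ε') : a * b ∈ leibnizSubmodule D (ε * ε') := by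
  intro c
  rw [mul_assoc, ha, hb, ha]
  simp only [add_mul, mul_add, smul_add, smul_mul_assoc, mul_smul_comm, mul_smul, mul_assoc,
    add_assoc]

theorem mul_self_mem_leibnizSubmodule_one (ha : a ∈ leibnizSubmodule D (-1)) :
    a * a ∈ leibnizSubmodule D 1 := by
  simpa only [neg_mul_neg, one_mul] using mul_mem_leibnizSubmodule ha ha

theorem map_mem_leibnizSubmodule_neg (hD : ∀ b, D (D b) = 0) (ha : a ∈ leibnizSubmodule D ε) :
    D a ∈ leibnizSubmodule D (-ε) := by
  intro b
  have h : D (D a * b) + ε • (D a * D b) = 0 := by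
    simpa only [ha b, ha (D b), map_add, map_smul, hD, mul_zero, smul_zero, add_zero]
      using hD (a * b)
  rw [hD, zero_mul, zero_add, neg_smul]
  exact eq_neg_of_add_eq_zero_left h

theorem map_mem_leibnizSubmodule_neg_of_anticommute (hDD' : ∀ b, D (D' b) + D' (D b) = 0)
    (ha : a ∈ leibnizSubmodule D ε) (ha' : a ∈ leibnizSubmodule D' ε')
    (hDa : D a ∈ leibnizSubmodule D' (-ε')) : D' a ∈ leibnizSubmodule D (-ε) := by
  intro b
  have hanti : ∀ c, D (D' c) = -D' (D c) := fun c => eq_neg_of_add_eq_zero_left (hDD' c)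
  have h : D (D' a * b) = -D' (D (a * b)) - ε' • D (a * D' b) := by
    rw [← hanti, ha' b, map_add, map_smul, add_sub_cancel_right]
  rw [h, ha b, map_add, map_smul, hDa b, ha' (D b), ha (D' b), hanti, hanti]
  simp only [smul_add, neg_smul, neg_mul, mul_neg, smul_neg, smul_comm ε ε']
  abel

theorem map_pow_eq_lie (ha : a ∈ leibnizSubmodule D 1) (hDa : D a = ⁅a, x⁆) {k : ℕ}
    (hk : 1 ≤ k) : D (a ^ k) = ⁅a ^ k, x⁆ := by
  induction k, hk using Nat.le_induction with
  | base => simpa only [pow_one] using hDa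
  | succ n _ ih =>
    calc D (a ^ (n + 1)) = ⁅a, x⁆ * a ^ n + a * ⁅a ^ n, x⁆ := by
          rw [pow_succ', ha, hDa, ih, one_smul]
      _ = ⁅a ^ (n + 1), x⁆ := by
          simp only [Ring.lie_def, pow_succ']
          noncomm_ring

end Leibniz

section Connection

variable {K R : Type*} [CommRing K] [Ring R] [Algebra K R] {D D' : R →ₗ[K] R} {θ : R}

theorem map_mul_self_eq_lie (hθ : θ ∈ leibnizSubmodule D (-1)) : D (θ * θ) = ⁅D θ, θ⁆ := by
  rw [hθ, neg_one_smul, ← sub_eq_add_neg, Ring.lie_def]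

theorem map_mul_self_eq_zero (hθ : θ ∈ leibnizSubmodule D (-1)) (hDθ : D θ = -(θ * θ)) :
    D (θ * θ) = 0 := by
  rw [map_mul_self_eq_lie hθ, hDθ]
  exact ((Commute.refl θ).mul_left (Commute.refl θ)).neg_left.lie_eq

theorem bianchi_identity (hDD' : D (D' θ) + D' (D θ) = 0)
    (hθ' : θ ∈ leibnizSubmodule D' (-1)) (hDθ : D θ = -(θ * θ)) : D (D' θ) = ⁅D' θ, θ⁆ := by
  rw [eq_neg_of_add_eq_zero_left hDD', hDθ, map_neg, neg_neg, map_mul_self_eq_lie hθ']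

theorem curvature_mem_leibnizSubmodule_one (hDD' : ∀ a, D (D' a) + D' (D a) = 0)
    (hθ : θ ∈ leibnizSubmodule D (-1)) (hθ' : θ ∈ leibnizSubmodule D' (-1))
    (hDθ : D θ = -(θ * θ)) : D' θ ∈ leibnizSubmodule D 1 := by
  have hDθ_mem : D θ ∈ leibnizSubmodule D' (- -1) := by
    rw [hDθ, neg_neg]
    exact neg_mem (mul_self_mem_leibnizSubmodule_one hθ')
  simpa only [neg_neg] using map_mem_leibnizSubmodule_neg_of_anticommute hDD' hθ hθ' hDθ_mem

theorem add_smul_mul_self_lie (x θ : R) (t : K) : ⁅x + t • (θ * θ), θ⁆ = ⁅x, θ⁆ := by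
  simp only [Ring.lie_def, add_mul, mul_add, smul_mul_assoc, mul_smul_comm, mul_assoc,
    add_sub_add_right_eq_sub]

theorem add_smul_mul_self_mem_leibnizSubmodule_one {x : R} (hx : x ∈ leibnizSubmodule D 1)
    (hθ : θ ∈ leibnizSubmodule D (-1)) (t : K) : x + t • (θ * θ) ∈ leibnizSubmodule D 1 :=
  add_mem hx (Submodule.smul_mem _ t (mul_self_mem_leibnizSubmodule_one hθ))

theorem stmt3_general (hD' : ∀ a, D' (D' a) = 0) (hDD' : ∀ a, D (D' a) + D' (D a) = 0)
    (hθ : θ ∈ leibnizSubmodule D (-1)) (hθ' : θ ∈ leibnizSubmodule D' (-1))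
    (hDθ : D θ = -(θ * θ)) (t : K) {k : ℕ} (hk : 1 ≤ k) :
    D ((D' θ + t • (θ * θ)) ^ k) = ⁅(D' θ + t • (θ * θ)) ^ k, θ⁆ ∧
    D' ((D' θ + t • (θ * θ)) ^ k) = t • ⁅(D' θ + t • (θ * θ)) ^ k, θ⁆ := by
  have hΘ : D' θ ∈ leibnizSubmodule D 1 := curvature_mem_leibnizSubmodule_one hDD' hθ hθ' hDθ
  have hΘ' : D' θ ∈ leibnizSubmodule D' 1 := by
    simpa only [neg_neg] using map_mem_leibnizSubmodule_neg hD' hθ'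
  have hDM : D (D' θ + t • (θ * θ)) = ⁅D' θ + t • (θ * θ), θ⁆ := by
    rw [add_smul_mul_self_lie, map_add, map_smul, map_mul_self_eq_zero hθ hDθ, smul_zero,
      add_zero, bianchi_identity (hDD' θ) hθ' hDθ]
  have hlie : ∀ a : R, ⁅a, t • θ⁆ = t • ⁅a, θ⁆ := fun a => by
    simp only [Ring.lie_def, mul_smul_comm, smul_mul_assoc, smul_sub]
  have hDM' : D' (D' θ + t • (θ * θ)) = ⁅D' θ + t • (θ * θ), t • θ⁆ := by
    rw [hlie, add_smul_mul_self_lie, map_add, map_smul, hD', zero_add,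
      map_mul_self_eq_lie hθ']
  refine ⟨map_pow_eq_lie (add_smul_mul_self_mem_leibnizSubmodule_one hΘ hθ t) hDM hk, ?_⟩
  rw [← hlie]
  exact map_pow_eq_lie (add_smul_mul_self_mem_leibnizSubmodule_one hΘ' hθ' t) hDM' hk

end Connection

theorem mapMatrix_mem_leibnizSubmodule {K R n : Type*} [CommRing K] [Ring R] [Algebra K R]
    [Fintype n] [DecidableEq n] {D : R →ₗ[K] R} {ε : K} {M : Matrix n n R}
    (hM : ∀ i j, M i j ∈ leibnizSubmodule D ε) : M ∈ leibnizSubmodule D.mapMatrix ε := by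
  intro N
  ext i j
  simp only [LinearMap.mapMatrix_apply, Matrix.map_apply, Matrix.mul_apply, Matrix.add_apply,
    Matrix.smul_apply, map_sum, Finset.smul_sum, ← Finset.sum_add_distrib]
  exact Finset.sum_congr rfl fun l _ => hM i l (N l j)

namespace DolbeaultAlgebra

variable {A : DolbeaultAlgebra Ω} {p q r : ℕ} {M : Matrix (Fin r) (Fin r) Ω}

theorem MatDeg.mem_leibnizSubmodule_pd (hM : A.MatDeg p q M) :
    M ∈ leibnizSubmodule A.pd.mapMatrix ((-1) ^ (p + q)) :=
  mapMatrix_mem_leibnizSubmodule fun i j b => A.pd_leibniz (M i j) b (hM i j)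

theorem MatDeg.mem_leibnizSubmodule_pdb (hM : A.MatDeg p q M) :
    M ∈ leibnizSubmodule A.pdb.mapMatrix ((-1) ^ (p + q)) :=
  mapMatrix_mem_leibnizSubmodule fun i j b => A.pdb_leibniz (M i j) b (hM i j)

theorem mapMatrix_pdb_pdb (A : DolbeaultAlgebra Ω) (M : Matrix (Fin r) (Fin r) Ω) :
    A.pdb.mapMatrix (A.pdb.mapMatrix M) = 0 :=
  Matrix.ext fun i j => A.pdb_pdb (M i j)

theorem mapMatrix_pd_pdb (A : DolbeaultAlgebra Ω) (M : Matrix (Fin r) (Fin r) Ω) :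
    A.pd.mapMatrix (A.pdb.mapMatrix M) + A.pdb.mapMatrix (A.pd.mapMatrix M) = 0 :=
  Matrix.ext fun i j => A.pd_pdb (M i j)

end DolbeaultAlgebra

/-- For every `t ∈ ℂ` and every `k ≥ 1`:
`∂((Θ + tθ²)ᵏ) = [(Θ + tθ²)ᵏ, θ]` and `∂̄((Θ + tθ²)ᵏ) = t[(Θ + tθ²)ᵏ, θ]`. -/
theorem stmt3
    (A : DolbeaultAlgebra Ω) (r : ℕ) (hr : 1 ≤ r)
    (θ Θ : Matrix (Fin r) (Fin r) Ω)
    (hθdeg : A.MatDeg 1 0 θ) (hθpd : A.mpd θ = -(θ * θ)) (hΘ : Θ = A.mpdb θ)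
    (t : ℂ) (k : ℕ) (hk : 1 ≤ k) :
    A.mpd ((Θ + t • (θ * θ)) ^ k) =
      (Θ + t • (θ * θ)) ^ k * θ - θ * (Θ + t • (θ * θ)) ^ k ∧
    A.mpdb ((Θ + t • (θ * θ)) ^ k) =
      t • ((Θ + t • (θ * θ)) ^ k * θ - θ * (Θ + t • (θ * θ)) ^ k) := by
  subst hΘ
  exact stmt3_general A.mapMatrix_pdb_pdb A.mapMatrix_pd_pdb
    (by simpa using hθdeg.mem_leibnizSubmodule_pd)
    (by simpa using hθdeg.mem_leibnizSubmodule_pdb) hθpd t hk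
end

section
/- Tr(𝛉𝚯²) = ∂( (1/2) Tr(𝛉𝚯𝛉̄ − 𝛉̄𝚯𝛉) ) − (1/2) Tr(𝛉²𝚯𝛉̄ + 𝛉̄𝚯𝛉²). -/
variable {Ω : Type*} [Ring Ω] [Algebra ℂ Ω]

/-!
Write `∇M = ∂M + θM - (-1)^|M| Mθ`. This is a graded derivation, and since the graded trace kills
graded commutators, `∂ Tr M = Tr ∇M`. The Maurer–Cartan equation `∂θ = -θ²` gives `∇θ = θ²` and
`∇² = 0`; differentiating `h⁻¹` gives `∇θ̄ = -Θ`, hence `∇Θ = 0`. Therefore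
`∂ Tr(θΘθ̄) = Tr(θ²Θθ̄) + Tr(θΘ²)` and `∂ Tr(θ̄Θθ) = -Tr(Θ²θ) - Tr(θ̄Θθ²)`. As `Θ²` is even,
`Tr(Θ²θ) = Tr(θΘ²)`, and half the difference of the two equations is the claim.
-/

namespace DolbeaultAlgebra

variable {r : ℕ}

/-- The complex conjugate double complex, in which `∂` and `∂̄` (and the two degrees) trade places.
It transports every fact about `∂` to `∂̄`: `A.conj.mpd` is `A.mpdb` by definition. -/
def conj (A : DolbeaultAlgebra Ω) : DolbeaultAlgebra Ω where
  deg p q := A.deg q p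
  one_mem := A.one_mem
  mul_mem := A.mul_mem
  gcomm {p q p' q'} a b ha hb := by
    simpa only [add_comm p, add_comm p'] using A.gcomm a b ha hb
  pd := A.pdb
  pdb := A.pd
  pd_mem := A.pdb_mem
  pdb_mem := A.pd_mem
  pd_pd := A.pdb_pdb
  pdb_pdb := A.pd_pd
  pd_pdb a := by rw [add_comm, A.pd_pdb]
  pd_leibniz {p q} a b ha := by simpa only [add_comm p] using A.pdb_leibniz a b ha
  pdb_leibniz {p q} a b ha := by simpa only [add_comm p] using A.pd_leibniz a b ha

section Matrix

variable {A : DolbeaultAlgebra Ω} {p q p' q' : ℕ} {M N : Matrix (Fin r) (Fin r) Ω}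

theorem MatDeg.mul (hM : A.MatDeg p q M) (hN : A.MatDeg p' q' N) :
    A.MatDeg (p + p') (q + q') (M * N) := fun i j => by
  rw [Matrix.mul_apply]
  exact Submodule.sum_mem _ fun k _ => A.mul_mem (hM i k) (hN k j)

theorem MatDeg.mpd (hM : A.MatDeg p q M) : A.MatDeg (p + 1) q (A.mpd M) :=
  fun i j => A.pd_mem (hM i j)

theorem MatDeg.trace_mul_comm (hM : A.MatDeg p q M) (hN : A.MatDeg p' q' N) :
    (M * N).trace = (-1 : ℂ) ^ ((p + q) * (p' + q')) • (N * M).trace := by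
  simp only [Matrix.trace, Matrix.diag_apply, Matrix.mul_apply, Finset.smul_sum]
  rw [Finset.sum_comm]
  exact Finset.sum_congr rfl fun i _ => Finset.sum_congr rfl fun j _ =>
    A.gcomm _ _ (hM j i) (hN i j)

theorem MatDeg.mpd_mul (hM : A.MatDeg p q M) (N : Matrix (Fin r) (Fin r) Ω) :
    A.mpd (M * N) = A.mpd M * N + (-1 : ℂ) ^ (p + q) • (M * A.mpd N) := by
  ext i j
  simp only [DolbeaultAlgebra.mpd, Matrix.map_apply, Matrix.mul_apply, Matrix.add_apply,
    Matrix.smul_apply, map_sum, Finset.smul_sum, ← Finset.sum_add_distrib]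
  exact Finset.sum_congr rfl fun k _ => A.pd_leibniz _ _ (hM i k)

variable (A M N)

theorem pd_trace : A.pd M.trace = (A.mpd M).trace :=
  AddMonoidHom.map_trace A.pd.toAddMonoidHom M

theorem mpd_add : A.mpd (M + N) = A.mpd M + A.mpd N :=
  map_add A.pd.mapMatrix M N

theorem mpd_sub : A.mpd (M - N) = A.mpd M - A.mpd N :=
  map_sub A.pd.mapMatrix M N

theorem mpd_smul (c : ℂ) : A.mpd (c • M) = c • A.mpd M :=
  map_smul A.pd.mapMatrix c M

theorem mpd_mpd : A.mpd (A.mpd M) = 0 :=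
  Matrix.ext fun i j => A.pd_pd (M i j)

theorem mpd_mpdb_add_mpdb_mpd : A.mpd (A.mpdb M) + A.mpdb (A.mpd M) = 0 :=
  Matrix.ext fun i j => A.pd_pdb (M i j)

theorem mpd_one : A.mpd (1 : Matrix (Fin r) (Fin r) Ω) = 0 := by
  have pd_one : A.pd 1 = 0 := by simpa using A.pd_leibniz 1 1 A.one_mem
  ext i j
  simp [mpd, Matrix.one_apply, apply_ite A.pd, pd_one]

end Matrix

section CovDeriv

variable {A : DolbeaultAlgebra Ω} {p q : ℕ} {θ M : Matrix (Fin r) (Fin r) Ω}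

/-- The covariant derivative `∇M = ∂M + θM - (-1)ⁿ Mθ` on endomorphism-valued forms induced by the
connection `∂ + θ`. Since matrices do not carry a degree, the total degree `n` of `M` is passed
explicitly. -/
def covDeriv (A : DolbeaultAlgebra Ω) (θ : Matrix (Fin r) (Fin r) Ω) (n : ℕ)
    (M : Matrix (Fin r) (Fin r) Ω) : Matrix (Fin r) (Fin r) Ω :=
  A.mpd M + θ * M - (-1 : ℂ) ^ n • (M * θ)

theorem covDeriv_neg (A : DolbeaultAlgebra Ω) (θ M : Matrix (Fin r) (Fin r) Ω) (n : ℕ) :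
    A.covDeriv θ n (-M) = -A.covDeriv θ n M := by
  have hpd : A.mpd (-M) = -A.mpd M := map_neg A.pd.mapMatrix M
  simp only [covDeriv, hpd, mul_neg, neg_mul, smul_neg]
  abel

theorem covDeriv_self (A : DolbeaultAlgebra Ω) (hflat : A.mpd θ = -(θ * θ)) :
    A.covDeriv θ 1 θ = θ ^ 2 := by
  rw [covDeriv, hflat, pow_one, neg_one_smul, pow_two]
  abel

theorem MatDeg.covDeriv (hθ : A.MatDeg 1 0 θ) (hM : A.MatDeg p q M) (n : ℕ) :
    A.MatDeg (p + 1) q (A.covDeriv θ n M) := fun i j => by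
  have hθM : A.MatDeg (p + 1) q (θ * M) := by
    simpa only [add_comm 1 p, zero_add] using hθ.mul hM
  exact sub_mem (add_mem (hM.mpd i j) (hθM i j)) (Submodule.smul_mem _ _ (hM.mul hθ i j))

theorem MatDeg.covDeriv_mul (hM : A.MatDeg p q M) (θ N : Matrix (Fin r) (Fin r) Ω) (p' q' : ℕ) :
    A.covDeriv θ (p + p' + (q + q')) (M * N) =
      A.covDeriv θ (p + q) M * N + (-1 : ℂ) ^ (p + q) • (M * A.covDeriv θ (p' + q') N) := by
  simp only [DolbeaultAlgebra.covDeriv, hM.mpd_mul, pow_add, mul_add, mul_sub, add_mul, sub_mul,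
    smul_mul_assoc, mul_smul_comm, mul_assoc]
  module

theorem MatDeg.pd_trace_eq_trace_covDeriv (hθ : A.MatDeg 1 0 θ) (hM : A.MatDeg p q M) :
    A.pd M.trace = (A.covDeriv θ (p + q) M).trace := by
  rw [DolbeaultAlgebra.covDeriv, Matrix.trace_sub, Matrix.trace_add, Matrix.trace_smul,
    hθ.trace_mul_comm hM, add_zero, one_mul, add_sub_cancel_right, pd_trace]

theorem MatDeg.pd_trace_mul_mul {p₁ q₁ p₂ q₂ p₃ q₃ : ℕ} {L M N : Matrix (Fin r) (Fin r) Ω}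
    (hθ : A.MatDeg 1 0 θ) (hL : A.MatDeg p₁ q₁ L) (hM : A.MatDeg p₂ q₂ M)
    (hN : A.MatDeg p₃ q₃ N) :
    A.pd (L * M * N).trace =
      (A.covDeriv θ (p₁ + q₁) L * M * N).trace
      + (-1 : ℂ) ^ (p₁ + q₁) • (L * A.covDeriv θ (p₂ + q₂) M * N).trace
      + (-1 : ℂ) ^ (p₁ + q₁ + (p₂ + q₂)) • (L * M * A.covDeriv θ (p₃ + q₃) N).trace := by
  rw [hθ.pd_trace_eq_trace_covDeriv ((hL.mul hM).mul hN), (hL.mul hM).covDeriv_mul,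
    hL.covDeriv_mul, add_mul, smul_mul_assoc, Matrix.trace_add, Matrix.trace_add,
    Matrix.trace_smul, Matrix.trace_smul, add_add_add_comm p₁]

theorem MatDeg.covDeriv_covDeriv (hθ : A.MatDeg 1 0 θ) (hflat : A.mpd θ = -(θ * θ))
    (hM : A.MatDeg p q M) :
    A.covDeriv θ (p + q + 1) (A.covDeriv θ (p + q) M) = 0 := by
  simp only [DolbeaultAlgebra.covDeriv, mpd_add, mpd_sub, mpd_smul, mpd_mpd, hθ.mpd_mul,
    hM.mpd_mul, hflat, pow_succ, mul_add, mul_sub, add_mul, sub_mul, neg_mul, mul_neg,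
    smul_mul_assoc, mul_smul_comm, mul_assoc]
  module

end CovDeriv

section ConnectionForm

variable (A : DolbeaultAlgebra Ω) {g : (Matrix (Fin r) (Fin r) Ω)ˣ}

/-- The connection form `g⁻¹∂g` of the Chern connection of the metric `g` in a holomorphic frame.
Its counterpart `g⁻¹∂̄g` is `A.conj.connectionForm g`. -/
def connectionForm (g : (Matrix (Fin r) (Fin r) Ω)ˣ) : Matrix (Fin r) (Fin r) Ω :=
  g⁻¹.val * A.mpd g.val

theorem matDeg_connectionForm (hg : A.MatDeg 0 0 g.val) (hginv : A.MatDeg 0 0 g⁻¹.val) :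
    A.MatDeg 1 0 (A.connectionForm g) :=
  hginv.mul hg.mpd

theorem mpd_inv (hginv : A.MatDeg 0 0 g⁻¹.val) :
    A.mpd g⁻¹.val = -(A.connectionForm g * g⁻¹.val) := by
  have hleibniz : A.mpd g⁻¹.val * g.val + A.connectionForm g = 0 := by
    simpa [mpd_one, connectionForm] using (hginv.mpd_mul g.val).symm
  rw [← neg_mul, Units.eq_mul_inv_iff_mul_eq]
  exact eq_neg_of_add_eq_zero_left hleibniz

theorem mpd_inv_mul (hginv : A.MatDeg 0 0 g⁻¹.val) (N : Matrix (Fin r) (Fin r) Ω) :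
    A.mpd (g⁻¹.val * N) = g⁻¹.val * A.mpd N - A.connectionForm g * (g⁻¹.val * N) := by
  rw [hginv.mpd_mul, A.mpd_inv hginv, add_zero, pow_zero, one_smul, neg_mul, mul_assoc]
  abel

theorem mpd_connectionForm (hginv : A.MatDeg 0 0 g⁻¹.val) :
    A.mpd (A.connectionForm g) = -(A.connectionForm g * A.connectionForm g) := by
  rw [connectionForm, A.mpd_inv_mul hginv, mpd_mpd, mul_zero, zero_sub, connectionForm]

theorem covDeriv_conj_connectionForm (hginv : A.MatDeg 0 0 g⁻¹.val) :
    A.covDeriv (A.connectionForm g) 1 (A.conj.connectionForm g) =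
      -A.mpdb (A.connectionForm g) := by
  have hpd : A.mpd (A.conj.connectionForm g) =
      g⁻¹.val * A.mpd (A.mpdb g.val) - A.connectionForm g * A.conj.connectionForm g :=
    A.mpd_inv_mul hginv _
  have hpdb : A.mpdb (A.connectionForm g) =
      g⁻¹.val * A.mpdb (A.mpd g.val) - A.conj.connectionForm g * A.connectionForm g :=
    A.conj.mpd_inv_mul hginv _
  rw [covDeriv, hpd, hpdb, eq_neg_of_add_eq_zero_left (A.mpd_mpdb_add_mpdb_mpd g.val),
    pow_one, neg_one_smul, mul_neg]
  abel

end ConnectionForm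

end DolbeaultAlgebra

theorem stmt7_general {A : DolbeaultAlgebra Ω} {r p q : ℕ} {θ φ Θ : Matrix (Fin r) (Fin r) Ω}
    (hθ : A.MatDeg 1 0 θ) (hflat : A.mpd θ = -(θ * θ))
    (hφ : A.MatDeg p q φ) (hodd : Odd (p + q)) (hΘ : A.covDeriv θ (p + q) φ = -Θ) :
    (θ * Θ ^ 2).trace =
      A.pd ((1 / 2 : ℂ) • (θ * Θ * φ - φ * Θ * θ).trace)
      - (1 / 2 : ℂ) • (θ ^ 2 * Θ * φ + φ * Θ * θ ^ 2).trace := by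
  have hΘdeg : A.MatDeg (p + 1) q Θ := fun i j => by
    simpa only [hΘ, Matrix.neg_apply, neg_mem_iff] using hθ.covDeriv hφ (p + q) i j
  have hbianchi : A.covDeriv θ (p + 1 + q) Θ = 0 := by
    have hsq := hθ.covDeriv_covDeriv hflat hφ
    rwa [hΘ, A.covDeriv_neg, neg_eq_zero, add_right_comm] at hsq
  have hφsign : (-1 : ℂ) ^ (p + q) = -1 := hodd.neg_one_pow
  have hΘsign : (-1 : ℂ) ^ (p + 1 + q) = 1 := by
    rw [add_right_comm, pow_succ, hφsign, neg_one_mul, neg_neg]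
  have hθΘφ : A.pd (θ * Θ * φ).trace = (θ ^ 2 * Θ * φ).trace + (θ * Θ ^ 2).trace := by
    rw [hθ.pd_trace_mul_mul hθ hΘdeg hφ, A.covDeriv_self hflat, hbianchi, hΘ,
      pow_add _ _ (p + 1 + q), hΘsign]
    simp [pow_two, mul_assoc]
  have hφΘθ : A.pd (φ * Θ * θ).trace = -(Θ ^ 2 * θ).trace - (φ * Θ * θ ^ 2).trace := by
    rw [hθ.pd_trace_mul_mul hφ hΘdeg hθ, A.covDeriv_self hflat, hbianchi, hΘ,
      pow_add _ _ (p + 1 + q), hφsign, hΘsign]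
    simp [pow_two, mul_assoc, sub_eq_add_neg]
  have hcyclic : (Θ ^ 2 * θ).trace = (θ * Θ ^ 2).trace := by
    rw [pow_two, (hΘdeg.mul hΘdeg).trace_mul_comm hθ, add_add_add_comm, add_zero, mul_one,
      pow_add, hΘsign, mul_one, one_smul]
  rw [map_smul, Matrix.trace_sub, map_sub, hθΘφ, hφΘθ, hcyclic, Matrix.trace_add]
  module

/-- `Tr(BθBΘ²) = ∂((1/2)Tr(BθBΘBθ̄ - Bθ̄BΘBθ)) - (1/2)Tr(Bθ²BΘBθ̄ + Bθ̄BΘBθ²)`. -/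
theorem stmt7
    (A : DolbeaultAlgebra Ω) (r : ℕ) (hr : 1 ≤ r)
    (h hinv : Matrix (Fin r) (Fin r) Ω)
    (hdeg : A.MatDeg 0 0 h) (hinvdeg : A.MatDeg 0 0 hinv)
    (hinvl : hinv * h = 1) (hinvr : h * hinv = 1)
    (Bθ Bθb BΘ : Matrix (Fin r) (Fin r) Ω)
    (hBθ : Bθ = hinv * A.mpd h) (hBθb : Bθb = hinv * A.mpdb h) (hBΘ : BΘ = A.mpdb Bθ) :
    Matrix.trace (Bθ * BΘ ^ 2) =
      A.pd ((1 / 2 : ℂ) • Matrix.trace (Bθ * BΘ * Bθb - Bθb * BΘ * Bθ))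
      - (1 / 2 : ℂ) • Matrix.trace (Bθ ^ 2 * BΘ * Bθb + Bθb * BΘ * Bθ ^ 2) := by
  subst hBθ hBθb hBΘ
  obtain ⟨g, rfl, rfl⟩ : ∃ g : (Matrix (Fin r) (Fin r) Ω)ˣ, g.val = h ∧ g⁻¹.val = hinv :=
    ⟨⟨h, hinv, hinvr, hinvl⟩, rfl, rfl⟩
  exact stmt7_general (A.matDeg_connectionForm hdeg hinvdeg) (A.mpd_connectionForm hinvdeg)
    (A.conj.matDeg_connectionForm hdeg hinvdeg) odd_one (A.covDeriv_conj_connectionForm hinvdeg)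
end

section
/- In the Cholesky setting, set I₁ = θ³ − θθ₂θ₁ − θ₁θ₂θ and I₂ = −θ³ + θθ₁θ₂ + θ₂θ₁θ, where θ = θ₁ + θ₂. Then ∂I₁ − I₁θ₁ − θ₁I₁ = −θ⁴ and ∂I₂ + I₂θ₂ + θ₂I₂ = −θ⁴. -/
variable {Ω : Type*} [Ring Ω] [Algebra ℂ Ω]

/-!
Conjugating by `b` turns `I ↦ ∂I - Iθ₁ - θ₁I` into `∂`, the form `θ₁` into `b⁻¹∂b`, and `θ` into
`h⁻¹∂h`; both of these satisfy `∂ω = -ω²`, so their squares are closed. As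
`I₁ = θ³ - θ²θ₁ + θθ₁² - θ₁θ² + θ₁²θ`, its twisted derivative is
`-θ⁴ + (θ²θ₁² - θ²θ₁²) + (θ₁²θ² - θ₁²θ²) = -θ⁴`. Exchanging `b` with `c⁻¹` exchanges `θ₁` with
`-θ₂`, and hence `θ` with `-θ` and `I₁` with `I₂`, so the second identity is an instance of the
first.
-/

section TwistedDifferential

variable {R : Type*} [Ring R] {d : R →+ R}

/-- `a` is even for `d` if left multiplication by `a` satisfies the ungraded Leibniz rule. Parity is
encoded through `d` alone, so that `R` carries no grading. -/
def IsEvenFor (d : R →+ R) (a : R) : Prop :=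
  ∀ x, d (a * x) = d a * x + a * d x

/-- `a` is odd for `d` if left multiplication by `a` satisfies the Leibniz rule with a sign. -/
def IsOddFor (d : R →+ R) (a : R) : Prop :=
  ∀ x, d (a * x) = d a * x - a * d x

theorem IsOddFor.sub {a a' : R} (ha : IsOddFor d a) (ha' : IsOddFor d a') :
    IsOddFor d (a - a') := fun x => by
  rw [sub_mul, map_sub, map_sub, ha x, ha' x]
  noncomm_ring

theorem IsOddFor.mul_isEvenFor {a e : R} (ha : IsOddFor d a) (he : IsEvenFor d e) :
    IsOddFor d (a * e) := fun x => by
  rw [mul_assoc, ha, he, ha]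
  noncomm_ring

theorem IsOddFor.mul_isOddFor {a a' : R} (ha : IsOddFor d a) (ha' : IsOddFor d a') :
    IsEvenFor d (a * a') := fun x => by
  rw [mul_assoc, ha, ha', ha]
  noncomm_ring

theorem IsOddFor.sq {a : R} (ha : IsOddFor d a) : IsEvenFor d (a ^ 2) := by
  rw [pow_two]
  exact ha.mul_isOddFor ha

namespace IsEvenFor

theorem isOddFor_map (hd : ∀ x, d (d x) = 0) {a : R} (ha : IsEvenFor d a) :
    IsOddFor d (d a) := fun x => by
  have h : d (d a * x) + d a * d x = 0 := by
    simpa only [ha x, map_add, ha (d x), hd, mul_zero, add_zero] using hd (a * x)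
  rw [hd, zero_mul, zero_sub, eq_neg_of_add_eq_zero_left h]

variable {u : Rˣ}

theorem map_one_of_unit (hu : IsEvenFor d (u : R)) : d 1 = 0 := by
  have h : (u : R) * d 1 = 0 := by simpa only [mul_one, left_eq_add] using hu 1
  exact u.mul_right_eq_zero.mp h

theorem map_inv_mul (hu : IsEvenFor d (u : R)) (x : R) :
    d (↑u⁻¹ * x) = ↑u⁻¹ * d x - ↑u⁻¹ * d u * ↑u⁻¹ * x := by
  have h : d x = d u * (↑u⁻¹ * x) + u * d (↑u⁻¹ * x) := by
    rw [← hu, Units.mul_inv_cancel_left]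
  rw [h, mul_add, Units.inv_mul_cancel_left]
  noncomm_ring

theorem map_inv (hu : IsEvenFor d (u : R)) : d ↑u⁻¹ = -(↑u⁻¹ * d u * ↑u⁻¹) := by
  simpa only [mul_one, hu.map_one_of_unit, mul_zero, zero_sub] using hu.map_inv_mul 1

theorem inv (hu : IsEvenFor d (u : R)) : IsEvenFor d (↑u⁻¹ : R) := fun x => by
  rw [hu.map_inv_mul, hu.map_inv]
  noncomm_ring

end IsEvenFor

/-- The right logarithmic derivative `(du)u⁻¹` of a unit: `θ₁` for `u = b`, and `-θ₂` for
`u = c⁻¹`. -/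
def rightLogDeriv (d : R →+ R) (u : Rˣ) : R :=
  d u * ↑u⁻¹

section RightLogDeriv

variable {u : Rˣ}

theorem rightLogDeriv_inv (hu : IsEvenFor d (u : R)) :
    rightLogDeriv d u⁻¹ = -(↑u⁻¹ * d u) := by
  rw [rightLogDeriv, hu.map_inv, inv_inv, neg_mul, Units.inv_mul_cancel_right]

theorem isOddFor_rightLogDeriv (hd : ∀ x, d (d x) = 0) (hu : IsEvenFor d (u : R)) :
    IsOddFor d (rightLogDeriv d u) :=
  (hu.isOddFor_map hd).mul_isEvenFor hu.inv

theorem map_rightLogDeriv (hd : ∀ x, d (d x) = 0) (hu : IsEvenFor d (u : R)) :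
    d (rightLogDeriv d u) = rightLogDeriv d u ^ 2 := by
  rw [rightLogDeriv, hu.isOddFor_map hd, hd, hu.map_inv]
  noncomm_ring

end RightLogDeriv

/-- The differential twisted by `x`, in the form `a ↦ da - ax - xa` it takes on odd elements. -/
def twistedDiff (d : R →+ R) (x : R) : R →+ R :=
  d - AddMonoidHom.mulRight x - AddMonoidHom.mulLeft x

theorem twistedDiff_apply (x a : R) : twistedDiff d x a = d a - a * x - x * a :=
  rfl

/-- `e` is closed for the differential twisted by `x`, in the form `e ↦ de + ex - xe` it takes on
even elements. -/
def IsTwistedClosed (d : R →+ R) (x e : R) : Prop :=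
  d e = x * e - e * x

theorem twistedDiff_mul_of_isTwistedClosed {x a e : R} (ha : IsOddFor d a)
    (he : IsTwistedClosed d x e) : twistedDiff d x (a * e) = twistedDiff d x a * e := by
  rw [twistedDiff_apply, twistedDiff_apply, ha, he]
  noncomm_ring

theorem IsTwistedClosed.twistedDiff_mul {x e : R} (he : IsTwistedClosed d x e)
    (he' : IsEvenFor d e) (a : R) : twistedDiff d x (e * a) = e * twistedDiff d x a := by
  rw [twistedDiff_apply, twistedDiff_apply, he', he]
  noncomm_ring

theorem isTwistedClosed_sq {x t : R} (ht : IsOddFor d t) (hdt : twistedDiff d x t = -t ^ 2) :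
    IsTwistedClosed d x (t ^ 2) := by
  have h : d t = -t ^ 2 + x * t + t * x := by
    rw [← hdt, twistedDiff_apply]
    abel
  rw [IsTwistedClosed, pow_two, ht, h]
  noncomm_ring

theorem twistedDiff_alternating_cubic {x t : R} (hx : IsOddFor d x) (ht : IsOddFor d t)
    (hdx : twistedDiff d x x = -x ^ 2) (hdt : twistedDiff d x t = -t ^ 2) :
    twistedDiff d x (t * t ^ 2 - t ^ 2 * x + t * x ^ 2 - x * t ^ 2 + x ^ 2 * t) = -t ^ 4 := by
  have hx2 := isTwistedClosed_sq hx hdx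
  have ht2 := isTwistedClosed_sq ht hdt
  calc
    _ = -t ^ 2 * t ^ 2 - t ^ 2 * -x ^ 2 + -t ^ 2 * x ^ 2 - -x ^ 2 * t ^ 2 + x ^ 2 * -t ^ 2 := by
      simp only [map_add, map_sub, twistedDiff_mul_of_isTwistedClosed ht ht2,
        ht2.twistedDiff_mul ht.sq, twistedDiff_mul_of_isTwistedClosed ht hx2,
        twistedDiff_mul_of_isTwistedClosed hx ht2, hx2.twistedDiff_mul hx.sq, hdx, hdt]
    _ = -t ^ 4 := by noncomm_ring

theorem twistedDiff_cubic_of_map_eq_sq {x w : R} (hx : IsOddFor d x) (hw : IsOddFor d w)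
    (hdx : d x = x ^ 2) (hdw : d w = w ^ 2) :
    twistedDiff d x ((x - w) ^ 3 + (x - w) * w * x + x * w * (x - w)) = -(x - w) ^ 4 := by
  have hx' : twistedDiff d x x = -x ^ 2 := by
    rw [twistedDiff_apply, hdx]
    noncomm_ring
  have ht' : twistedDiff d x (x - w) = -(x - w) ^ 2 := by
    rw [twistedDiff_apply, map_sub, hdx, hdw]
    noncomm_ring
  rw [← twistedDiff_alternating_cubic hx (hx.sub hw) hx' ht']
  congr 1
  noncomm_ring

end TwistedDifferential

namespace DolbeaultAlgebra

/-- The entrywise `∂` on matrices, `mpd`, as an additive map. -/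
def mpdHom {r : ℕ} (A : DolbeaultAlgebra Ω) :
    Matrix (Fin r) (Fin r) Ω →+ Matrix (Fin r) (Fin r) Ω :=
  A.pd.toAddMonoidHom.mapMatrix

theorem mpdHom_mpdHom {r : ℕ} (A : DolbeaultAlgebra Ω) (M : Matrix (Fin r) (Fin r) Ω) :
    A.mpdHom (A.mpdHom M) = 0 :=
  Matrix.ext fun i j => A.pd_pd (M i j)

theorem MatDeg.mpdHom_mul {r p q : ℕ} {A : DolbeaultAlgebra Ω} {M : Matrix (Fin r) (Fin r) Ω}
    (hM : A.MatDeg p q M) (N : Matrix (Fin r) (Fin r) Ω) :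
    A.mpdHom (M * N) = A.mpdHom M * N + (-1 : ℂ) ^ (p + q) • (M * A.mpdHom N) := by
  ext i j
  calc
    A.pd ((M * N) i j)
      = ∑ k, (A.pd (M i k) * N k j + (-1 : ℂ) ^ (p + q) • (M i k * A.pd (N k j))) := by
      simp only [Matrix.mul_apply, map_sum, A.pd_leibniz _ _ (hM i _)]
    _ = _ := by
      rw [Finset.sum_add_distrib, ← Finset.smul_sum]
      rfl

theorem MatDeg.isEvenFor {r : ℕ} {A : DolbeaultAlgebra Ω} {M : Matrix (Fin r) (Fin r) Ω}
    (hM : A.MatDeg 0 0 M) : IsEvenFor A.mpdHom M := fun N => by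
  simpa only [add_zero, pow_zero, one_smul] using hM.mpdHom_mul N

end DolbeaultAlgebra

theorem stmt18_general {R : Type*} [Ring R] {d : R →+ R} (hd : ∀ x, d (d x) = 0) (b c : Rˣ)
    (hb : IsEvenFor d (b : R)) (hc : IsEvenFor d (c : R)) {θ₁ θ₂ θ I₁ I₂ : R}
    (hθ₁ : θ₁ = d b * ↑b⁻¹) (hθ₂ : θ₂ = ↑c⁻¹ * d c) (hθ : θ = θ₁ + θ₂)
    (hI₁ : I₁ = θ ^ 3 - θ * θ₂ * θ₁ - θ₁ * θ₂ * θ)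
    (hI₂ : I₂ = -θ ^ 3 + θ * θ₁ * θ₂ + θ₂ * θ₁ * θ) :
    d I₁ - I₁ * θ₁ - θ₁ * I₁ = -θ ^ 4 ∧ d I₂ + I₂ * θ₂ + θ₂ * I₂ = -θ ^ 4 := by
  have hlog₁ : θ₁ = rightLogDeriv d b := hθ₁
  have hlog₂ : -θ₂ = rightLogDeriv d c⁻¹ := by rw [rightLogDeriv_inv hc, hθ₂]
  have hodd₁ : IsOddFor d θ₁ := hlog₁ ▸ isOddFor_rightLogDeriv hd hb
  have hodd₂ : IsOddFor d (-θ₂) := hlog₂ ▸ isOddFor_rightLogDeriv hd hc.inv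
  have hmap₁ : d θ₁ = θ₁ ^ 2 := hlog₁ ▸ map_rightLogDeriv hd hb
  have hmap₂ : d (-θ₂) = (-θ₂) ^ 2 := hlog₂ ▸ map_rightLogDeriv hd hc.inv
  have hsub : θ₁ - -θ₂ = θ := by rw [hθ, sub_neg_eq_add]
  have hsub_swap : -θ₂ - θ₁ = -θ := by rw [hθ, neg_add_rev, sub_eq_add_neg]
  constructor
  · have key := twistedDiff_cubic_of_map_eq_sq hodd₁ hodd₂ hmap₁ hmap₂
    rw [hsub] at key
    rw [← key, twistedDiff_apply, hI₁]
    simp only [mul_neg, neg_mul, ← sub_eq_add_neg]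
  · have key := twistedDiff_cubic_of_map_eq_sq hodd₂ hodd₁ hmap₂ hmap₁
    rw [hsub_swap, Even.neg_pow (by decide : Even 4)] at key
    rw [← key, twistedDiff_apply, hI₂]
    simp only [Odd.neg_pow (by decide : Odd 3), mul_neg, neg_mul, neg_neg, sub_neg_eq_add]

/-- In the Cholesky setting, with `I₁ = θ³ - θθ₂θ₁ - θ₁θ₂θ` and
`I₂ = -θ³ + θθ₁θ₂ + θ₂θ₁θ`: `∂I₁ - I₁θ₁ - θ₁I₁ = -θ⁴` and `∂I₂ + I₂θ₂ + θ₂I₂ = -θ⁴`. -/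
theorem stmt18
    (A : DolbeaultAlgebra Ω) (r : ℕ) (hr : 1 ≤ r)
    (b c binv cinv : Matrix (Fin r) (Fin r) Ω)
    (hbdeg : A.MatDeg 0 0 b) (hcdeg : A.MatDeg 0 0 c)
    (hbinvdeg : A.MatDeg 0 0 binv) (hcinvdeg : A.MatDeg 0 0 cinv)
    (hbu : ∀ i j : Fin r, j < i → b i j = 0) (hbd : ∀ i : Fin r, b i i = 1)
    (hcl : ∀ i j : Fin r, i < j → c i j = 0)
    (hbinvl : binv * b = 1) (hbinvr : b * binv = 1)
    (hcinvl : cinv * c = 1) (hcinvr : c * cinv = 1)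
    (h hinv : Matrix (Fin r) (Fin r) Ω) (hh : h = c * b) (hhinv : hinv = binv * cinv)
    (θ₁ θ₂ θ θb₁ θb₂ θb : Matrix (Fin r) (Fin r) Ω)
    (hθ₁ : θ₁ = A.mpd b * binv) (hθ₂ : θ₂ = cinv * A.mpd c) (hθ : θ = θ₁ + θ₂)
    (hθb₁ : θb₁ = A.mpdb b * binv) (hθb₂ : θb₂ = cinv * A.mpdb c) (hθb : θb = θb₁ + θb₂)
    (Bθ Bθb BΘ : Matrix (Fin r) (Fin r) Ω)
    (hBθ : Bθ = hinv * A.mpd h) (hBθb : Bθb = hinv * A.mpdb h) (hBΘ : BΘ = A.mpdb Bθ)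
    (I₁ I₂ : Matrix (Fin r) (Fin r) Ω)
    (hI₁ : I₁ = θ ^ 3 - θ * θ₂ * θ₁ - θ₁ * θ₂ * θ)
    (hI₂ : I₂ = -θ ^ 3 + θ * θ₁ * θ₂ + θ₂ * θ₁ * θ) :
    A.mpd I₁ - I₁ * θ₁ - θ₁ * I₁ = -θ ^ 4 ∧
    A.mpd I₂ + I₂ * θ₂ + θ₂ * I₂ = -θ ^ 4 :=
  stmt18_general A.mpdHom_mpdHom ⟨b, binv, hbinvr, hbinvl⟩ ⟨c, cinv, hcinvr, hcinvl⟩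
    hbdeg.isEvenFor hcdeg.isEvenFor hθ₁ hθ₂ hθ hI₁ hI₂
end
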